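/- Let c > 0 and α ∈ (0,1), set q_n = 1 − c/n^α, and let (M_n^*) be a sequence of integers with 1 ≤ M_n^* ≤ n−1 such that lim_{n→∞} (n − M_n^*)/n^α = 1/c. Then lim_{n→∞} 𝒫_n^{q_n}(S(n,M_n^*)) = 1/e; moreover, for any sequence (M_n) of integers with 0 ≤ M_n ≤ n−1, limsup_{n→∞} 𝒫_n^{q_n}(S(n,M_n)) ≤ 1/e. -/

import Mathlib

open Finset Filter

/-- The number of inversions of a permutation of `Fin n`. -/
def invCount (n : ℕ) (σ : Equiv.Perm (Fin n)) : ℕ :=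
  (Finset.univ.filter (fun p : Fin n × Fin n => p.1 < p.2 ∧ σ p.2 < σ p.1)).card

/-- Normalization constant of the Mallows distribution:
`Z_n(q) = ∑_{σ ∈ S_n} q^{inv σ}`. -/
noncomputable def mallowsZ (n : ℕ) (q : ℝ) : ℝ :=
  ∑ σ : Equiv.Perm (Fin n), q ^ invCount n σ

/-- The Mallows probability of a set `A` of permutations:
`P_n^q(A) = (∑_{σ ∈ A} q^{inv σ}) / Z_n(q)`. -/
noncomputable def mallowsProb (n : ℕ) (q : ℝ) (A : Finset (Equiv.Perm (Fin n))) : ℝ :=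
  (∑ σ ∈ A, q ^ invCount n σ) / mallowsZ n q

/-- The success event for the strategy `S(n,M)`.  Positions are indexed by `Fin n`
(the index `i : Fin n` represents the `(i+1)`-st arriving item) and ranks are the
values of `σ` (the value `n-1`, i.e. the top of `Fin n`, represents the highest
rank `n`).  For `M ≥ 1` the strategy succeeds iff for some position `j` with
`(j:ℕ) ≥ M` (i.e. item number `j+1 ≥ M+1`) the item at position `j` has the top
rank and the maximum rank among the items strictly before position `j` equals the
maximum rank among the first `M` items.  For `M = 0` it succeeds iff the first
item has top rank. -/
def winEvent (n M : ℕ) : Finset (Equiv.Perm (Fin n)) :=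
  if M = 0 then
    Finset.univ.filter (fun σ => ∀ i : Fin n, (i : ℕ) = 0 → (σ i : ℕ) = n - 1)
  else
    Finset.univ.filter (fun σ => ∃ j : Fin n, M ≤ (j : ℕ) ∧ (σ j : ℕ) = n - 1 ∧
      (Finset.univ.filter (fun i : Fin n => i < j)).sup (fun i => (σ i : ℕ)) =
      (Finset.univ.filter (fun i : Fin n => (i : ℕ) < M)).sup (fun i => (σ i : ℕ)))

/-- `𝒫_n^q(S(n,M))`, the success probability of the strategy `S(n,M)` under the
Mallows distribution with parameter `q`. -/
noncomputable def succProb (n M : ℕ) (q : ℝ) : ℝ := mallowsProb n q (winEvent n M)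

/-!
Inserting a last item of rank `v` into an arrival order of `n` items creates `n + 1 - v` inversions
(`v` counted from `1`). Hence, under the Mallows distribution, the last of `n + 1` items is the best
one with probability `1 / [n + 1]_q`, independently of the relative order of the others. If it is
the best one, `S(n + 1, M)` succeeds exactly when the best of the first `n` items is among the first
`M`; otherwise it succeeds exactly when `S(n, M)` does. Solving this recursion gives
`𝒫_n^q(S(n, M)) = q ^ (n - M - 1) * [M]_q / [n]_q * ∑_{M ≤ i < n} 1 / [i]_q` for `1 ≤ M < n`.

With `x = (n - M) (1 - q)`, comparing `[i]_q` with `[M]_q` bounds this above by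
`x e⁻ˣ / (q (1 - q ^ n)) ≤ e⁻¹ / (q (1 - q ^ n))`, and comparing it with `1 / (1 - q)` bounds it
below by `x q ^ (n - M) (1 - q ^ M)`. Both bounds tend to `e⁻¹` when `q → 1`, `n (1 - q) → ∞` and
`x → 1`.
-/

open Topology

section qNumber

/-- The `q`-analogue `[n]_q = 1 + q + ⋯ + q ^ (n - 1)` of `n`. -/
noncomputable def qNumber (q : ℝ) (n : ℕ) : ℝ :=
  ∑ i ∈ range n, q ^ i

@[simp]
lemma qNumber_zero (q : ℝ) : qNumber q 0 = 0 := by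
  simp [qNumber]

@[simp]
lemma qNumber_one (q : ℝ) : qNumber q 1 = 1 := by
  simp [qNumber]

lemma qNumber_succ (q : ℝ) (n : ℕ) : qNumber q (n + 1) = q * qNumber q n + 1 :=
  geom_sum_succ

lemma one_sub_mul_qNumber (q : ℝ) (n : ℕ) : (1 - q) * qNumber q n = 1 - q ^ n :=
  mul_neg_geom_sum q n

variable {q : ℝ}

lemma qNumber_nonneg (hq : 0 ≤ q) (n : ℕ) : 0 ≤ qNumber q n :=
  sum_nonneg fun i _ => pow_nonneg hq i

lemma qNumber_pos (hq : 0 ≤ q) {n : ℕ} (hn : n ≠ 0) : 0 < qNumber q n :=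
  geom_sum_pos hq hn

lemma qNumber_mono (hq : 0 ≤ q) : Monotone (qNumber q) := fun _ _ h =>
  sum_le_sum_of_subset_of_nonneg (range_mono h) fun i _ _ => pow_nonneg hq i

lemma one_sub_le_one_div_qNumber (hq : 0 ≤ q) {n : ℕ} (hn : n ≠ 0) :
    1 - q ≤ 1 / qNumber q n := by
  rw [le_div_iff₀ (qNumber_pos hq hn), one_sub_mul_qNumber]
  linarith [pow_nonneg hq n]

lemma sum_fin_pow_sub (q : ℝ) (n : ℕ) : ∑ i : Fin n, q ^ (n - (i : ℕ)) = q * qNumber q n := by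
  have h := sum_flip (n := n) fun k => q ^ k
  rw [sum_range_succ, Nat.sub_self, pow_zero, ← qNumber, qNumber_succ, add_left_inj] at h
  rw [← h, Fin.sum_univ_eq_sum_range fun k => q ^ (n - k)]

end qNumber

section permSnoc

/-- The arrival order of `n + 1` items whose last item has rank `v` and whose first `n` items
have the relative order `τ`. -/
def permSnoc {n : ℕ} (v : Fin (n + 1)) (τ : Equiv.Perm (Fin n)) : Equiv.Perm (Fin (n + 1)) :=
  (finSuccEquivLast.trans τ.optionCongr).trans (finSuccEquiv' v).symm

variable {n : ℕ} (v : Fin (n + 1)) (τ : Equiv.Perm (Fin n))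

@[simp]
lemma permSnoc_last : permSnoc v τ (Fin.last n) = v := by
  simp [permSnoc]

@[simp]
lemma permSnoc_castSucc (i : Fin n) : permSnoc v τ i.castSucc = v.succAbove (τ i) := by
  simp [permSnoc]

lemma permSnoc_bijective (n : ℕ) :
    Function.Bijective fun p : Fin (n + 1) × Equiv.Perm (Fin n) => permSnoc p.1 p.2 := by
  refine (Fintype.bijective_iff_injective_and_card _).2 ⟨?_, ?_⟩
  · rintro ⟨v, τ⟩ ⟨w, ρ⟩ h
    obtain rfl : v = w := by simpa using congr($h (Fin.last n))
    obtain rfl : τ = ρ := Equiv.ext fun i => by simpa using congr($h i.castSucc)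
    rfl
  · simp [Fintype.card_perm, Nat.factorial_succ]

lemma sum_perm_fin_succ {R : Type*} [AddCommMonoid R] (f : Equiv.Perm (Fin (n + 1)) → R) :
    ∑ σ, f σ = ∑ v : Fin (n + 1), ∑ τ : Equiv.Perm (Fin n), f (permSnoc v τ) := by
  rw [← Fintype.sum_prod_type', ← (permSnoc_bijective n).sum_comp f]

lemma invCount_eq_sum (n : ℕ) (σ : Equiv.Perm (Fin n)) :
    invCount n σ = ∑ j, ∑ i, if i < j ∧ σ j < σ i then 1 else 0 := by
  rw [invCount, card_filter, Fintype.sum_prod_type, sum_comm]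

lemma sum_ite_lt_succAbove : (∑ k : Fin n, if v < v.succAbove k then 1 else 0) = n - (v : ℕ) := by
  have h : #(Ioi v) = n - (v : ℕ) := Fin.card_Ioi v
  rw [← filter_lt_eq_Ioi, card_filter, Fin.sum_univ_succAbove _ v] at h
  simpa using h

lemma invCount_permSnoc :
    invCount (n + 1) (permSnoc v τ) = invCount n τ + (n - (v : ℕ)) := by
  have inversions_with_last :
      (∑ i : Fin n, if v < v.succAbove (τ i) then 1 else 0) = n - (v : ℕ) := by
    rw [Equiv.sum_comp τ fun k => if v < v.succAbove k then 1 else 0, sum_ite_lt_succAbove]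
  simp only [invCount_eq_sum, Fin.sum_univ_castSucc, permSnoc_castSucc, permSnoc_last,
    Fin.castSucc_lt_castSucc_iff, Fin.succAbove_lt_succAbove_iff, Fin.castSucc_lt_last,
    Fin.not_lt.2 (Fin.le_last _), true_and, false_and, if_false, add_zero,
    inversions_with_last]

end permSnoc

section Mallows

variable {n : ℕ} {q : ℝ}

lemma mallowsZ_pos (hq : 0 < q) (n : ℕ) : 0 < mallowsZ n q :=
  sum_pos (fun _ _ => pow_pos hq _) univ_nonempty

lemma mallowsProb_nonneg (hq : 0 < q) (A : Finset (Equiv.Perm (Fin n))) :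
    0 ≤ mallowsProb n q A :=
  div_nonneg (sum_nonneg fun _ _ => (pow_pos hq _).le) (mallowsZ_pos hq n).le

lemma mallowsProb_univ (hq : 0 < q) : mallowsProb n q univ = 1 :=
  div_self (mallowsZ_pos hq n).ne'

lemma mallowsProb_empty (n : ℕ) (q : ℝ) : mallowsProb n q ∅ = 0 := by
  simp [mallowsProb]

variable {A : Finset (Equiv.Perm (Fin (n + 1)))} {B C : Finset (Equiv.Perm (Fin n))}

lemma sum_pow_invCount_succ (q : ℝ) (hB : ∀ τ, permSnoc (Fin.last n) τ ∈ A ↔ τ ∈ B)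
    (hC : ∀ v ≠ Fin.last n, ∀ τ, permSnoc v τ ∈ A ↔ τ ∈ C) :
    ∑ σ ∈ A, q ^ invCount (n + 1) σ =
      ∑ τ ∈ B, q ^ invCount n τ + q * qNumber q n * ∑ τ ∈ C, q ^ invCount n τ := by
  have sum_as_ite {m : ℕ} (D : Finset (Equiv.Perm (Fin m))) :
      ∑ σ ∈ D, q ^ invCount m σ = ∑ σ, if σ ∈ D then q ^ invCount m σ else 0 := by
    rw [sum_ite_mem, univ_inter]
  simp only [sum_as_ite, sum_perm_fin_succ, Fin.sum_univ_castSucc, invCount_permSnoc, hB,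
    hC _ (Fin.castSucc_ne_last _), Fin.val_castSucc, Fin.val_last, Nat.sub_self, add_zero]
  rw [add_comm, ← sum_fin_pow_sub, sum_mul_sum]
  simp only [mul_ite, mul_zero, pow_add, mul_comm]

lemma mallowsZ_succ (n : ℕ) (q : ℝ) : mallowsZ (n + 1) q = qNumber q (n + 1) * mallowsZ n q := by
  rw [mallowsZ, sum_pow_invCount_succ q (B := univ) (C := univ) (by simp) (by simp), qNumber_succ,
    mallowsZ]
  ring

lemma qNumber_mul_mallowsProb_succ (hq : 0 < q)
    (hB : ∀ τ, permSnoc (Fin.last n) τ ∈ A ↔ τ ∈ B)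
    (hC : ∀ v ≠ Fin.last n, ∀ τ, permSnoc v τ ∈ A ↔ τ ∈ C) :
    qNumber q (n + 1) * mallowsProb (n + 1) q A =
      mallowsProb n q B + q * qNumber q n * mallowsProb n q C := by
  have := (qNumber_pos hq.le n.succ_ne_zero).ne'
  have := (mallowsZ_pos hq n).ne'
  simp only [mallowsProb, mallowsZ_succ, sum_pow_invCount_succ q hB hC]
  field_simp

end Mallows

section Events

lemma val_succAbove_eq_iff {n : ℕ} {v : Fin (n + 1)} {a : Fin n} :
    (v.succAbove a : ℕ) = n ↔ v ≠ Fin.last n ∧ (a : ℕ) = n - 1 := by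
  simp only [Fin.succAbove, Fin.lt_def, Fin.ext_iff, ne_eq, Fin.val_last, Fin.val_castSucc]
  split_ifs <;> simp <;> omega

lemma exists_perm_apply_eq_sub_one {n : ℕ} (hn : n ≠ 0) (σ : Equiv.Perm (Fin n)) :
    ∃ i, (σ i : ℕ) = n - 1 :=
  ⟨σ.symm ⟨n - 1, by omega⟩, by simp⟩

lemma sup_eq_sup_iff_of_subset {α β : Type*} [LinearOrder β] [OrderBot β] {s t : Finset α}
    (f : α → β) (hst : s ⊆ t) (hs : s.Nonempty) :
    t.sup f = s.sup f ↔ ∀ a ∈ t, ∃ b ∈ s, f a ≤ f b := by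
  rw [le_antisymm_iff, and_iff_left (sup_mono hst), Finset.sup_le_iff]
  simp only [← sup'_eq_sup hs, le_sup'_iff]

/-- The event that the item of highest rank is among the first `M` ones; ranks start at `0`, as in
`winEvent`. -/
def bestBefore (n M : ℕ) : Finset (Equiv.Perm (Fin n)) :=
  {σ | ∃ i : Fin n, (i : ℕ) < M ∧ (σ i : ℕ) = n - 1}

lemma mem_bestBefore {n M : ℕ} {σ : Equiv.Perm (Fin n)} :
    σ ∈ bestBefore n M ↔ ∃ i : Fin n, (i : ℕ) < M ∧ (σ i : ℕ) = n - 1 := by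
  simp [bestBefore]

lemma bestBefore_self {n : ℕ} (hn : n ≠ 0) : bestBefore n n = univ := by
  ext σ
  simpa [mem_bestBefore] using exists_perm_apply_eq_sub_one hn σ

lemma mem_bestBefore_iff_forall_exists_le {n M : ℕ} (hn : n ≠ 0) {σ : Equiv.Perm (Fin n)} :
    σ ∈ bestBefore n M ↔ ∀ i, ∃ k : Fin n, (k : ℕ) < M ∧ σ i ≤ σ k := by
  rw [mem_bestBefore]
  constructor
  · rintro ⟨k, hkM, hk⟩ i
    exact ⟨k, hkM, by rw [Fin.le_def]; omega⟩
  · intro h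
    obtain ⟨i, hi⟩ := exists_perm_apply_eq_sub_one hn σ
    obtain ⟨k, hkM, hik⟩ := h i
    exact ⟨k, hkM, by rw [Fin.le_def] at hik; omega⟩

lemma mem_winEvent {n M : ℕ} (hM : M ≠ 0) {σ : Equiv.Perm (Fin n)} :
    σ ∈ winEvent n M ↔ ∃ j : Fin n, M ≤ (j : ℕ) ∧ (σ j : ℕ) = n - 1 ∧
      ∀ i < j, ∃ k : Fin n, (k : ℕ) < M ∧ σ i ≤ σ k := by
  simp only [winEvent, if_neg hM, mem_filter_univ]
  refine exists_congr fun j => and_congr_right fun hj => and_congr_right fun _ => ?_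
  rw [sup_eq_sup_iff_of_subset]
  · simp
  · intro i
    simp only [mem_filter_univ, Fin.lt_def]
    omega
  · exact ⟨⟨0, by omega⟩, by simpa [Nat.pos_iff_ne_zero]⟩

lemma winEvent_zero {n : ℕ} (hn : n ≠ 0) : winEvent n 0 = bestBefore n 1 := by
  have := NeZero.mk hn
  ext σ
  simp [winEvent, mem_bestBefore]

lemma winEvent_self {n : ℕ} (hn : n ≠ 0) : winEvent n n = ∅ := by
  ext σ
  simp [mem_winEvent hn, Fin.is_lt, not_le.2]

variable {n M : ℕ} {v : Fin (n + 1)} {τ : Equiv.Perm (Fin n)}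

lemma permSnoc_mem_bestBefore (hM : M ≤ n) :
    permSnoc v τ ∈ bestBefore (n + 1) M ↔ v ≠ Fin.last n ∧ τ ∈ bestBefore n M := by
  have val_τ_ne (i : Fin n) : (τ i : ℕ) ≠ n := (τ i).is_lt.ne
  by_cases hv : v = Fin.last n <;>
    simp [hv, val_τ_ne, mem_bestBefore, Fin.exists_fin_succ', val_succAbove_eq_iff, hM.not_gt]

lemma permSnoc_mem_winEvent (hM : M ≠ 0) (hMn : M ≤ n) :
    permSnoc v τ ∈ winEvent (n + 1) M ↔
      v ≠ Fin.last n ∧ τ ∈ winEvent n M ∨ v = Fin.last n ∧ τ ∈ bestBefore n M := by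
  have hn : n ≠ 0 := by omega
  have v_eq_last : (v : ℕ) = n ↔ v = Fin.last n := by simp [Fin.ext_iff]
  have val_τ_ne (i : Fin n) : (τ i : ℕ) ≠ n := (τ i).is_lt.ne
  by_cases hv : v = Fin.last n <;>
    simp [hv, val_τ_ne, v_eq_last, mem_winEvent hM, mem_bestBefore_iff_forall_exists_le hn,
      Fin.exists_fin_succ', Fin.forall_fin_succ', val_succAbove_eq_iff, hMn, hMn.not_gt,
      Fin.castSucc_lt_last, Fin.not_lt.2 (Fin.le_last _)]

end Events

section SuccessProbability

variable {n M : ℕ} {q : ℝ}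

lemma qNumber_mul_mallowsProb_bestBefore (hq : 0 < q) (hMn : M ≤ n) :
    qNumber q n * mallowsProb n q (bestBefore n M) = q ^ (n - M) * qNumber q M := by
  induction n, hMn using Nat.le_induction with
  | base =>
    obtain rfl | hM := eq_or_ne M 0
    · simp
    · simp [bestBefore_self hM, mallowsProb_univ hq]
  | succ n hMn ih =>
    rw [qNumber_mul_mallowsProb_succ hq (B := ∅) (C := bestBefore n M)
      (by simp [permSnoc_mem_bestBefore hMn])
      (fun v hv τ => by simp [permSnoc_mem_bestBefore hMn, hv]),
      mallowsProb_empty, zero_add, mul_assoc, ih, Nat.sub_add_comm hMn]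
    ring

/-- The factor `q` replaces the exponent `n - M - 1`, which would truncate at `n = M`. -/
lemma qNumber_mul_succProb (hq : 0 < q) (hM : M ≠ 0) (hMn : M ≤ n) :
    q * (qNumber q n * succProb n M q) =
      q ^ (n - M) * qNumber q M * ∑ i ∈ Ico M n, 1 / qNumber q i := by
  simp only [succProb]
  induction n, hMn using Nat.le_induction with
  | base => simp [winEvent_self hM, mallowsProb_empty]
  | succ n hMn ih =>
    have prob_bestBefore : mallowsProb n q (bestBefore n M) =
        q ^ (n - M) * qNumber q M * (1 / qNumber q n) := by
      rw [← qNumber_mul_mallowsProb_bestBefore hq hMn]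
      field_simp [(qNumber_pos hq.le (show n ≠ 0 by omega)).ne']
    rw [qNumber_mul_mallowsProb_succ hq (B := bestBefore n M) (C := winEvent n M)
      (by simp [permSnoc_mem_winEvent hM hMn])
      (fun v hv τ => by simp [permSnoc_mem_winEvent hM hMn, hv]),
      prob_bestBefore, sum_Ico_succ_top hMn, Nat.sub_add_comm hMn]
    linear_combination q * ih

lemma succProb_nonneg (hq : 0 < q) (n M : ℕ) : 0 ≤ succProb n M q :=
  mallowsProb_nonneg hq _

lemma qNumber_mul_succProb_le (hq : 0 < q) (hMn : M < n) :
    q * (qNumber q n * succProb n M q) ≤ (n - M : ℕ) * q ^ (n - M) := by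
  obtain rfl | hM := eq_or_ne M 0
  · have hn : 1 ≤ n := hMn
    rw [succProb, winEvent_zero hMn.ne', qNumber_mul_mallowsProb_bestBefore hq hn, qNumber_one,
      mul_one, mul_pow_sub_one hMn.ne', Nat.sub_zero]
    exact le_mul_of_one_le_left (pow_nonneg hq.le n) (mod_cast hn)
  · have ratio_le_one : ∀ i ∈ Ico M n, qNumber q M * (1 / qNumber q i) ≤ 1 := fun i hi => by
      rw [mul_one_div]
      exact div_le_one_of_le₀ (qNumber_mono hq.le (mem_Ico.1 hi).1) (qNumber_nonneg hq.le i)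
    rw [qNumber_mul_succProb hq hM hMn.le, mul_assoc, mul_sum, mul_comm]
    gcongr
    simpa using sum_le_card_nsmul _ _ 1 ratio_le_one

lemma pow_le_exp_neg_mul_one_sub (hq : 0 ≤ q) (m : ℕ) : q ^ m ≤ Real.exp (-(m * (1 - q))) := by
  rw [← mul_neg, Real.exp_nat_mul]
  gcongr
  simpa using Real.one_sub_le_exp_neg (1 - q)

lemma succProb_le (hq : 0 < q) (hq1 : q < 1) (hMn : M < n) :
    succProb n M q ≤ Real.exp (-1) / (q * (1 - q ^ n)) := by
  have pow_lt_one : q ^ n < 1 := pow_lt_one₀ hq.le hq1 (by omega)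
  have h1q : 0 < 1 - q := sub_pos.2 hq1
  rw [le_div_iff₀ (mul_pos hq (sub_pos.2 pow_lt_one)), ← one_sub_mul_qNumber]
  calc
    succProb n M q * (q * ((1 - q) * qNumber q n))
      = (1 - q) * (q * (qNumber q n * succProb n M q)) := by ring
    _ ≤ (1 - q) * ((n - M : ℕ) * q ^ (n - M)) :=
      mul_le_mul_of_nonneg_left (qNumber_mul_succProb_le hq hMn) h1q.le
    _ = (n - M : ℕ) * (1 - q) * q ^ (n - M) := by ring
    _ ≤ (n - M : ℕ) * (1 - q) * Real.exp (-((n - M : ℕ) * (1 - q))) := by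
      gcongr
      exact pow_le_exp_neg_mul_one_sub hq.le _
    _ ≤ Real.exp (-1) := Real.mul_exp_neg_le_exp_neg_one _

lemma le_succProb (hq : 0 < q) (hq1 : q ≤ 1) (hM : M ≠ 0) (hMn : M ≤ n) :
    (n - M : ℕ) * (1 - q) * q ^ (n - M) * (1 - q ^ M) ≤ succProb n M q := by
  have one_sub_le : ∀ i ∈ Ico M n, 1 - q ≤ 1 / qNumber q i := fun i hi =>
    one_sub_le_one_div_qNumber hq.le (by grind)
  have hqM := qNumber_nonneg hq.le M
  calc
    (n - M : ℕ) * (1 - q) * q ^ (n - M) * (1 - q ^ M)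
      = (1 - q) * (q ^ (n - M) * qNumber q M * ((n - M : ℕ) * (1 - q))) := by
      rw [← one_sub_mul_qNumber]
      ring
    _ ≤ (1 - q) * (q ^ (n - M) * qNumber q M * ∑ i ∈ Ico M n, 1 / qNumber q i) := by
      gcongr
      simpa using card_nsmul_le_sum _ _ _ one_sub_le
    _ = q * (1 - q ^ n) * succProb n M q := by
      rw [← qNumber_mul_succProb hq hM hMn, ← one_sub_mul_qNumber]
      ring
    _ ≤ succProb n M q := by
      refine mul_le_of_le_one_left (succProb_nonneg hq n M) (mul_le_one₀ hq1 ?_ ?_)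
      · exact sub_nonneg.2 (pow_le_one₀ hq.le hq1)
      · exact sub_le_self _ (pow_nonneg hq.le n)

end SuccessProbability

section Powers

variable {ι : Type*} {l : Filter ι} {q : ι → ℝ} {m : ι → ℕ}

lemma tendsto_pow_of_tendsto_mul_one_sub {t : ℝ} (hq : Tendsto q l (𝓝 1))
    (h : Tendsto (fun i => m i * (1 - q i)) l (𝓝 t)) :
    Tendsto (fun i => q i ^ m i) l (𝓝 (Real.exp (-t))) := by
  have lower : Tendsto (fun i => m i * (1 - (q i)⁻¹)) l (𝓝 (-t)) := by
    have := h.neg.mul (hq.inv₀ one_ne_zero)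
    rw [inv_one, mul_one] at this
    refine this.congr' ?_
    filter_upwards [hq.eventually_ne one_ne_zero] with i hi
    field_simp
    ring
  have upper : Tendsto (fun i => m i * (q i - 1)) l (𝓝 (-t)) :=
    h.neg.congr fun i => by ring
  have q_pos : ∀ᶠ i in l, 0 < q i := hq.eventually_const_lt one_pos
  have tendsto_mul_log : Tendsto (fun i => m i * Real.log (q i)) l (𝓝 (-t)) := by
    refine tendsto_of_tendsto_of_tendsto_of_le_of_le' lower upper ?_ ?_ <;>
      filter_upwards [q_pos] with i hi <;> gcongr
    · exact Real.one_sub_inv_le_log_of_pos hi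
    · exact Real.log_le_sub_one_of_pos hi
  refine (Real.continuous_exp.tendsto _ |>.comp tendsto_mul_log).congr' ?_
  filter_upwards [q_pos] with i hi
  simp [Real.exp_nat_mul, Real.exp_log hi]

lemma tendsto_pow_zero_of_tendsto_mul_one_sub_atTop (hq : ∀ᶠ i in l, 0 ≤ q i)
    (h : Tendsto (fun i => m i * (1 - q i)) l atTop) :
    Tendsto (fun i => q i ^ m i) l (𝓝 0) := by
  refine tendsto_of_tendsto_of_tendsto_of_le_of_le' tendsto_const_nhds
    (Real.tendsto_exp_neg_atTop_nhds_zero.comp h) ?_ ?_ <;> filter_upwards [hq] with i hi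
  · exact pow_nonneg hi _
  · exact pow_le_exp_neg_mul_one_sub hi _

end Powers

section Asymptotics

variable {q : ℕ → ℝ}

lemma eventually_lt_one_of_tendsto_mul_one_sub_atTop
    (h : Tendsto (fun n : ℕ => n * (1 - q n)) atTop atTop) : ∀ᶠ n in atTop, q n < 1 := by
  filter_upwards [h.eventually_gt_atTop 0] with n hn
  exact sub_pos.1 (pos_of_mul_pos_right hn n.cast_nonneg)

lemma tendsto_exp_neg_one_div_mul_one_sub_pow (hq : Tendsto q atTop (𝓝 1))
    (hnq : Tendsto (fun n : ℕ => n * (1 - q n)) atTop atTop) :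
    Tendsto (fun n => Real.exp (-1) / (q n * (1 - q n ^ n))) atTop (𝓝 (Real.exp (-1))) := by
  have q_nonneg : ∀ᶠ n in atTop, 0 ≤ q n := hq.eventually_const_le one_pos
  have pow_tendsto := tendsto_pow_zero_of_tendsto_mul_one_sub_atTop q_nonneg hnq
  simpa [Pi.div_def] using tendsto_const_nhds.div (hq.mul (pow_tendsto.const_sub 1)) (by simp)

lemma eventually_succProb_le (hq : Tendsto q atTop (𝓝 1))
    (hnq : Tendsto (fun n : ℕ => n * (1 - q n)) atTop atTop) {M : ℕ → ℕ}
    (hM : ∀ᶠ n in atTop, M n < n) :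
    ∀ᶠ n in atTop, succProb n (M n) (q n) ≤ Real.exp (-1) / (q n * (1 - q n ^ n)) := by
  filter_upwards [hq.eventually_const_lt one_pos, hM,
    eventually_lt_one_of_tendsto_mul_one_sub_atTop hnq] with n h0 hMn h1
  exact succProb_le h0 h1 hMn

theorem limsup_succProb_le_exp_neg_one (hq : Tendsto q atTop (𝓝 1))
    (hnq : Tendsto (fun n : ℕ => n * (1 - q n)) atTop atTop) {M : ℕ → ℕ}
    (hM : ∀ᶠ n in atTop, M n < n) :
    limsup (fun n => succProb n (M n) (q n)) atTop ≤ Real.exp (-1) := by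
  have bound_tendsto := tendsto_exp_neg_one_div_mul_one_sub_pow hq hnq
  rw [← bound_tendsto.limsup_eq]
  refine limsup_le_limsup (eventually_succProb_le hq hnq hM) ?_ bound_tendsto.isBoundedUnder_le
  refine IsBoundedUnder.isCoboundedUnder_le (isBoundedUnder_of_eventually_ge (a := 0) ?_)
  filter_upwards [hq.eventually_const_lt one_pos] with n hn
  exact succProb_nonneg hn _ _

theorem tendsto_succProb_exp_neg_one (hq : Tendsto q atTop (𝓝 1))
    (hnq : Tendsto (fun n : ℕ => n * (1 - q n)) atTop atTop) {M : ℕ → ℕ}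
    (hM : Tendsto (fun n : ℕ => ((n : ℝ) - M n) * (1 - q n)) atTop (𝓝 1)) :
    Tendsto (fun n => succProb n (M n) (q n)) atTop (𝓝 (Real.exp (-1))) := by
  have q_pos : ∀ᶠ n in atTop, 0 < q n := hq.eventually_const_lt one_pos
  have q_lt_one := eventually_lt_one_of_tendsto_mul_one_sub_atTop hnq
  have M_lt : ∀ᶠ n in atTop, M n < n := by
    filter_upwards [hM.eventually_const_lt one_pos, q_lt_one] with n hn h1
    exact_mod_cast sub_pos.1 (pos_of_mul_pos_left hn (sub_pos.2 h1).le)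
  have hMq : Tendsto (fun n => M n * (1 - q n)) atTop atTop :=
    (hnq.atTop_add hM.neg).congr fun n => by ring
  have hM' : Tendsto (fun n => (n - M n : ℕ) * (1 - q n)) atTop (𝓝 1) := by
    refine hM.congr' ?_
    filter_upwards [M_lt] with n hn
    rw [Nat.cast_sub hn.le]
  have lower_tendsto : Tendsto
      (fun n => (n - M n : ℕ) * (1 - q n) * q n ^ (n - M n) * (1 - q n ^ M n)) atTop
      (𝓝 (Real.exp (-1))) := by
    have pow_tendsto :=
      tendsto_pow_zero_of_tendsto_mul_one_sub_atTop (q_pos.mono fun _ => le_of_lt) hMq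
    simpa using (hM'.mul (tendsto_pow_of_tendsto_mul_one_sub hq hM')).mul (pow_tendsto.const_sub 1)
  refine tendsto_of_tendsto_of_tendsto_of_le_of_le' lower_tendsto
    (tendsto_exp_neg_one_div_mul_one_sub_pow hq hnq) ?_ (eventually_succProb_le hq hnq M_lt)
  filter_upwards [q_pos, q_lt_one, M_lt, hMq.eventually_gt_atTop 0] with n h0 h1 hMn hMpos
  refine le_succProb h0 h1.le ?_ hMn.le
  intro hM0
  simp [hM0] at hMpos

lemma tendsto_one_sub_div_rpow (c : ℝ) {α : ℝ} (hα : 0 < α) :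
    Tendsto (fun n : ℕ => 1 - c / (n : ℝ) ^ α) atTop (𝓝 1) := by
  have := ((tendsto_rpow_atTop hα).comp tendsto_natCast_atTop_atTop).const_div_atTop c
  simpa using this.const_sub 1

lemma tendsto_mul_div_rpow_atTop {c α : ℝ} (hc : 0 < c) (hα : α < 1) :
    Tendsto (fun n : ℕ => (n : ℝ) * (c / (n : ℝ) ^ α)) atTop atTop := by
  have := (tendsto_rpow_atTop (sub_pos.2 hα)).comp tendsto_natCast_atTop_atTop
  refine (this.const_mul_atTop hc).congr' ?_
  filter_upwards [eventually_gt_atTop 0] with n hn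
  rw [Function.comp_apply, Real.rpow_sub (by exact_mod_cast hn), Real.rpow_one]
  ring

end Asymptotics

theorem stmt_8_general {q : ℕ → ℝ} {Mstar : ℕ → ℕ} (hq : Tendsto q atTop (𝓝 1))
    (hnq : Tendsto (fun n : ℕ => n * (1 - q n)) atTop atTop)
    (hlim : Tendsto (fun n : ℕ => ((n : ℝ) - Mstar n) * (1 - q n)) atTop (𝓝 1)) :
    Tendsto (fun n => succProb n (Mstar n) (q n)) atTop (𝓝 (Real.exp 1)⁻¹) ∧
      ∀ M : ℕ → ℕ, (∀ᶠ n in atTop, M n < n) →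
        limsup (fun n => succProb n (M n) (q n)) atTop ≤ (Real.exp 1)⁻¹ := by
  rw [← Real.exp_neg]
  exact ⟨tendsto_succProb_exp_neg_one hq hnq hlim,
    fun M hM => limsup_succProb_le_exp_neg_one hq hnq hM⟩

theorem stmt_8 (c α : ℝ) (hc : 0 < c) (hα : α ∈ Set.Ioo (0 : ℝ) 1)
    (Mstar : ℕ → ℕ) (hMstar : ∀ n, 2 ≤ n → 1 ≤ Mstar n ∧ Mstar n ≤ n - 1)
    (hlim : Tendsto (fun n : ℕ => ((n : ℝ) - Mstar n) / (n : ℝ) ^ α) atTop (nhds (1 / c))) :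
    Tendsto (fun n : ℕ => succProb n (Mstar n) (1 - c / (n : ℝ) ^ α)) atTop
      (nhds (Real.exp 1)⁻¹) ∧
    ∀ M : ℕ → ℕ, (∀ n, 1 ≤ n → M n ≤ n - 1) →
      Filter.limsup (fun n : ℕ => succProb n (M n) (1 - c / (n : ℝ) ^ α)) atTop ≤
        (Real.exp 1)⁻¹ := by
  have tendsto_reject : Tendsto (fun n : ℕ => ((n : ℝ) - Mstar n) * (c / (n : ℝ) ^ α)) atTop
      (𝓝 1) := by
    simpa [hc.ne', div_mul_eq_mul_div, mul_div_assoc] using hlim.mul_const c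
  obtain ⟨htend, hlimsup⟩ := stmt_8_general (tendsto_one_sub_div_rpow c hα.1)
    (by simpa using tendsto_mul_div_rpow_atTop hc hα.2) (by simpa using tendsto_reject)
  refine ⟨htend, fun M hM => hlimsup M ?_⟩
  filter_upwards [eventually_ge_atTop 1] with n hn
  have := hM n hn
  omega
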